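/- Let k = 3, n = 10, and let α_1,…,α_10 ∈ ℂ^3 be as listed in the context. Let L_1 = {1,2,3,4}, L_2 = {1,5,6,7}, L_3 = {2,5,8,9}, L_4 = {3,6,8,10}, L_5 = {4,7,9,10}. Then the subspace D_{L_1} ∩ D_{L_2} ∩ D_{L_3} ∩ D_{L_4} ∩ D_{L_5} of ℂ^{10} has dimension at least 6; in particular the intersection of the five discriminantal hyperplanes D_{L_1},…,D_{L_5} has codimension at most 4, strictly smaller than its multiplicity 5. -/

import Mathlib

open Matrix

/-- The normals of the arrangement of 10 hyperplanes in `ℂ³` of Example `B(10,3,A⁰)`. -/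
def alpha10 : Fin 10 → Fin 3 → ℂ :=
  ![![0, 10, 3],
    ![20, 0, -9],
    ![2, -3, 0],
    ![3, 1, 0],
    ![0, 0, 1],
    ![1, -1, 1],
    ![1, 2, 2],
    ![4, -1, -3],
    ![314, -40, -197],
    ![139, 30, -43]]

/-- `Dsub10 L` is the set of translations `t ∈ ℂ¹⁰` such that the affine hyperplanes
`H_i^{t_i} = {x ∈ ℂ³ : α_i ⬝ x = t_i}`, `i ∈ L`, have a common point. -/
def Dsub10 (L : Finset (Fin 10)) : Set (Fin 10 → ℂ) :=
  {t | ∃ p : Fin 3 → ℂ, ∀ i ∈ L, alpha10 i ⬝ᵥ p = t i}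

/-!
Each set `L_a` is a circuit of the normals, so up to scaling there is a single linear relation
`∑ i ∈ L_a, c_i • α_i = 0`, and `D_{L_a}` is the hyperplane `∑ i ∈ L_a, c_i * t_i = 0`. Any two of
the five circuits share exactly one index and every index lies in exactly two circuits. The normals
are chosen so that the five relations can be scaled to have opposite coefficients at each shared
index. Their sum then vanishes, so the five hyperplane equations are linearly dependent and
cut out a subspace of codimension at most 4.
-/

section General

variable {K ι κ m : Type*} [Field K] [Fintype m]

/-- The set `D_L` of translations `t` for which the affine hyperplanes `A i ⬝ᵥ p = t i`, `i ∈ L`,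
have a common point `p`, as a subspace. The rows of `A` are the normals of the arrangement. -/
def discriminantalSubspace (A : Matrix ι m K) (L : Set ι) : Submodule K (ι → K) where
  carrier := {t | ∃ p : m → K, ∀ i ∈ L, A i ⬝ᵥ p = t i}
  zero_mem' := ⟨0, fun i _ ↦ dotProduct_zero (A i)⟩
  add_mem' := by
    rintro t u ⟨p, hp⟩ ⟨q, hq⟩
    exact ⟨p + q, fun i hi ↦ by rw [dotProduct_add, hp i hi, hq i hi, Pi.add_apply]⟩
  smul_mem' := by
    rintro r t ⟨p, hp⟩
    exact ⟨r • p, fun i hi ↦ by rw [dotProduct_smul, hp i hi, Pi.smul_apply]⟩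

theorem exists_forall_dotProduct_eq_of_linearIndepOn {v : ι → m → K} {S : Set ι}
    (hS : LinearIndepOn K v S) (t : ι → K) : ∃ p : m → K, ∀ i ∈ S, v i ⬝ᵥ p = t i := by
  classical
  obtain ⟨g, hg⟩ := LinearMap.exists_leftInverse_of_injective _ (LinearMap.ker_eq_bot.mpr hS)
  let f : Module.Dual K (m → K) := Finsupp.linearCombination K (fun i : S ↦ t i) ∘ₗ g
  have hf (i : S) : f (v i) = t i := by
    have hgi : g (v i) = Finsupp.single i 1 := by
      simpa using LinearMap.congr_fun hg (Finsupp.single i 1)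
    simp [f, hgi]
  refine ⟨(dotProductEquiv K m).symm f, fun i hi ↦ ?_⟩
  rw [dotProduct_comm, ← dotProductEquiv_apply_apply, LinearEquiv.apply_symm_apply, hf ⟨i, hi⟩]

theorem linearIndepOn_range_of_det_ne_zero [DecidableEq m] {A : Matrix ι m K} {e : m → ι}
    (h : (A.submatrix e id).det ≠ 0) : LinearIndepOn K A.row (Set.range e) := by
  have hrows : LinearIndependent K (A.row ∘ e) := linearIndependent_rows_of_det_ne_zero h
  exact (linearIndepOn_range_iff hrows.injective.of_comp A.row).mpr hrows

theorem mem_discriminantalSubspace_insert_iff [Fintype ι] {A : Matrix ι m K} {S : Set ι} {j : ι}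
    {c : ι → K} (hS : LinearIndepOn K A.row S) (hj : c j ≠ 0)
    (hsupp : Function.support c ⊆ insert j S) (hrel : c ᵥ* A = 0) (t : ι → K) :
    t ∈ discriminantalSubspace A (insert j S) ↔ c ⬝ᵥ t = 0 := by
  have hkey {p : m → K} (hp : ∀ i ∈ S, A i ⬝ᵥ p = t i) :
      c j * (A j ⬝ᵥ p - t j) = -(c ⬝ᵥ t) := by
    have hsingle : c ⬝ᵥ (A *ᵥ p - t) = c j * (A j ⬝ᵥ p - t j) := by
      refine Fintype.sum_eq_single j fun i hij ↦ ?_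
      by_cases hi : c i = 0
      · rw [hi, zero_mul]
      · exact mul_eq_zero_of_right _ (sub_eq_zero.mpr (hp i ((hsupp hi).resolve_left hij)))
    rw [← hsingle, dotProduct_sub, dotProduct_mulVec, hrel, zero_dotProduct, zero_sub]
  constructor
  · rintro ⟨p, hp⟩
    obtain ⟨hpj, hpS⟩ := Set.forall_mem_insert.mp hp
    rw [← neg_eq_zero, ← hkey hpS, hpj, sub_self, mul_zero]
  · intro ht
    obtain ⟨p, hp⟩ := exists_forall_dotProduct_eq_of_linearIndepOn hS t
    have hmul : c j * (A j ⬝ᵥ p - t j) = 0 := by rw [hkey hp, ht, neg_zero]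
    have hpj : A j ⬝ᵥ p = t j := sub_eq_zero.mp ((mul_eq_zero.mp hmul).resolve_left hj)
    exact ⟨p, Set.forall_mem_insert.mpr ⟨hpj, hp⟩⟩

theorem card_lt_card_add_finrank_ker_mulVecLin [Fintype κ] {R : Matrix κ m K}
    (hR : ¬LinearIndependent K R.row) :
    Fintype.card m < Fintype.card κ + Module.finrank K (LinearMap.ker R.mulVecLin) := by
  have hrank : R.rank < Fintype.card κ := by
    rwa [linearIndependent_iff_card_le_finrank_span, Set.finrank, ← rank_eq_finrank_span_row,
      not_le] at hR
  have hnullity : R.rank + Module.finrank K (LinearMap.ker R.mulVecLin) = Fintype.card m := by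
    rw [rank, LinearMap.finrank_range_add_finrank_ker, Module.finrank_fintype_fun_eq_card]
  lia

theorem card_lt_card_add_finrank_iInf [Fintype κ] {W : κ → Submodule K (m → K)}
    {R : Matrix κ m K} (hW : ∀ k t, t ∈ W k ↔ R k ⬝ᵥ t = 0)
    (hR : ¬LinearIndependent K R.row) :
    Fintype.card m < Fintype.card κ + Module.finrank K (⨅ k, W k : Submodule K (m → K)) := by
  have hker : ⨅ k, W k = LinearMap.ker R.mulVecLin := by
    ext t
    simp only [Submodule.mem_iInf, hW, LinearMap.mem_ker, mulVecLin_apply, funext_iff, mulVec,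
      Pi.zero_apply]
  rw [hker]
  exact card_lt_card_add_finrank_ker_mulVecLin hR

end General

/-- The circuits `L_1, …, L_5` of the normals `alpha10`, with 0-based indices. -/
def circuit10 : Fin 5 → Fin 4 → Fin 10 :=
  ![![0, 1, 2, 3], ![0, 4, 5, 6], ![1, 4, 7, 8], ![2, 5, 7, 9], ![3, 6, 8, 9]]

/-- The linear relations among the normals `alpha10`: row `a` is supported on `circuit10 a`, and
the rows are scaled so that the two nonzero entries of each column are opposite. -/
def relation10 : Matrix (Fin 5) (Fin 10) ℂ :=
  !![-231, -77, -490, 840,   0,    0,    0,    0,   0,   0;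
      231,   0,    0,   0,  77,  770, -770,    0,   0,   0;
        0,  77,    0,   0, -77,    0,    0,  400, -10,   0;
        0,   0,  490,   0,   0, -770,    0, -400,   0,  10;
        0,   0,    0, -840,  0,    0,  770,    0,  10, -10]

theorem relation10_mul_alpha10 : relation10 * of alpha10 = 0 := by
  ext a j
  fin_cases a <;> fin_cases j <;>
    norm_num [relation10, alpha10, mul_apply, Fin.sum_univ_succ]

theorem support_relation10_subset (a : Fin 5) :
    Function.support (relation10 a) ⊆ Set.range (circuit10 a) := by
  intro i
  fin_cases a <;> fin_cases i <;> simp [relation10, circuit10]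

theorem relation10_circuit10_zero_ne_zero (a : Fin 5) : relation10 a (circuit10 a 0) ≠ 0 := by
  fin_cases a <;> simp [relation10, circuit10]

theorem det_submatrix_tail_circuit10_ne_zero (a : Fin 5) :
    ((of alpha10).submatrix (Fin.tail (circuit10 a)) id).det ≠ 0 := by
  simp only [det_fin_three, submatrix_apply, id_eq, Fin.tail]
  fin_cases a <;> simp [circuit10, alpha10] <;> norm_num

theorem sum_relation10_eq_zero (i : Fin 10) : ∑ a, relation10 a i = 0 := by
  fin_cases i <;> simp [relation10, Fin.sum_univ_succ]

theorem not_linearIndependent_relation10 : ¬LinearIndependent ℂ relation10.row :=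
  Fintype.not_linearIndependent_iff.mpr
    ⟨1, by ext i; simpa using sum_relation10_eq_zero i, 0, one_ne_zero⟩

theorem mem_discriminantalSubspace_circuit10_iff (a : Fin 5) (t : Fin 10 → ℂ) :
    t ∈ discriminantalSubspace (of alpha10) (Set.range (circuit10 a)) ↔
      relation10 a ⬝ᵥ t = 0 := by
  have hsupp := support_relation10_subset a
  rw [Fin.range_fin_succ] at hsupp ⊢
  exact mem_discriminantalSubspace_insert_iff
    (linearIndepOn_range_of_det_ne_zero (det_submatrix_tail_circuit10_ne_zero a))
    (relation10_circuit10_zero_ne_zero a) hsupp (congrFun relation10_mul_alpha10 a) t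

theorem coe_discriminantalSubspace_alpha10 (L : Finset (Fin 10)) :
    (discriminantalSubspace (of alpha10) L : Set (Fin 10 → ℂ)) = Dsub10 L :=
  rfl

theorem coe_iInf_discriminantalSubspace_circuit10 :
    ((⨅ a, discriminantalSubspace (of alpha10) (Set.range (circuit10 a)) :
        Submodule ℂ (Fin 10 → ℂ)) : Set (Fin 10 → ℂ)) =
      Dsub10 {0, 1, 2, 3} ∩ Dsub10 {0, 4, 5, 6} ∩ Dsub10 {1, 4, 7, 8} ∩
        Dsub10 {2, 5, 7, 9} ∩ Dsub10 {3, 6, 8, 9} := by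
  ext t
  simp only [← coe_discriminantalSubspace_alpha10, Submodule.coe_iInf, Set.mem_iInter,
    Set.mem_inter_iff, Fin.forall_fin_succ]
  simp [circuit10, Matrix.range_cons, and_assoc, -Set.union_insert, -Set.union_singleton]

/-- For `L_1 = {1,2,3,4}`, `L_2 = {1,5,6,7}`, `L_3 = {2,5,8,9}`, `L_4 = {3,6,8,10}`,
`L_5 = {4,7,9,10}` (written below with 0-based indices), the intersection
`D_{L_1} ∩ ⋯ ∩ D_{L_5}` has dimension at least 6, i.e. codimension at most 4, strictly
smaller than its multiplicity 5. -/
theorem stmt_16 :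
    ∃ W : Submodule ℂ (Fin 10 → ℂ),
      (W : Set (Fin 10 → ℂ)) =
        Dsub10 {0, 1, 2, 3} ∩ Dsub10 {0, 4, 5, 6} ∩ Dsub10 {1, 4, 7, 8} ∩
        Dsub10 {2, 5, 7, 9} ∩ Dsub10 {3, 6, 8, 9} ∧
      6 ≤ Module.finrank ℂ W := by
  refine ⟨⨅ a, discriminantalSubspace (of alpha10) (Set.range (circuit10 a)),
    coe_iInf_discriminantalSubspace_circuit10, ?_⟩
  have hcard := card_lt_card_add_finrank_iInf mem_discriminantalSubspace_circuit10_iff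
    not_linearIndependent_relation10
  simp only [Fintype.card_fin] at hcard
  lia
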